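/- arXiv:math/0104131 — 3 statements merged into one kernel-verified Lean document; each statement's English description precedes it below -/
import Mathlib

section
/- Let m be a positive integer. Then for every function x : ℕ → ℚ, 2·I_{2m}(y) = I_m(x) + I_m(w), where y : ℕ → ℚ is defined by y(r) := 0 for odd r and y(r) := x(r/2) for even r, and w : ℕ → ℚ is defined by w(r) := 0 for odd r and w(r) := x(r) for even r. -/
open Finset

/-- Cycle index of the regular cyclic group of order `n`:
`I_n(x) = (1/n) * ∑_{r | n} φ(r) * x(r)^(n/r)`. -/
def cycleIndex (n : ℕ) (x : ℕ → ℚ) : ℚ :=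
  (1 / (n : ℚ)) * ∑ r ∈ n.divisors, (Nat.totient r : ℚ) * x r ^ (n / r)

/-- A sum over the divisors of `2 * m` that vanishes at odd divisors is a sum over the divisors
of `m`. -/
theorem sum_divisors_two_mul_of_odd_eq_zero {M : Type*} [AddCommMonoid M] {m : ℕ} (hm : m ≠ 0)
    {f : ℕ → M} (hf : ∀ r ∈ (2 * m).divisors, Odd r → f r = 0) :
    ∑ r ∈ (2 * m).divisors, f r = ∑ s ∈ m.divisors, f (2 * s) := by
  symm
  refine Finset.sum_of_injOn (fun s => 2 * s) (fun a _ b _ h => by simpa using h) ?_ ?_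
    fun _ _ => rfl
  · intro s hs
    simp only [Finset.mem_coe, Nat.mem_divisors] at hs ⊢
    exact ⟨mul_dvd_mul_left 2 hs.1, by omega⟩
  · intro r hr hr'
    refine hf r hr (Nat.not_even_iff_odd.mp fun ⟨s, hs⟩ => hr' ⟨s, ?_, by simp only; omega⟩)
    rw [← two_mul] at hs
    subst hs
    exact Nat.mem_divisors.mpr
      ⟨Nat.dvd_of_mul_dvd_mul_left two_pos (Nat.dvd_of_mem_divisors hr), hm⟩

/-- `2·I_{2m}(y) = I_m(x) + I_m(w)`, where `y(r) = 0` for odd `r`,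
`y(r) = x(r/2)` for even `r`; `w(r) = 0` for odd `r`, `w(r) = x(r)` for even `r`. -/
theorem two_mul_cycleIndex_shift (m : ℕ) (hm : 0 < m) (x : ℕ → ℚ) :
    2 * cycleIndex (2 * m) (fun r => if Odd r then 0 else x (r / 2)) =
      cycleIndex m x + cycleIndex m (fun r => if Odd r then 0 else x r) := by
  have hm' : (m : ℚ) ≠ 0 := by positivity
  have exponent_ne_zero : ∀ n : ℕ, ∀ r ∈ n.divisors, n / r ≠ 0 := fun n r hr =>
    (Nat.div_pos (Nat.divisor_le hr) (Nat.pos_of_mem_divisors hr)).ne'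
  unfold cycleIndex
  rw [sum_divisors_two_mul_of_odd_eq_zero hm.ne', ← mul_add, ← Finset.sum_add_distrib,
    ← mul_assoc]
  · congr 1
    · push_cast
      field_simp
    · refine Finset.sum_congr rfl fun s hs => ?_
      beta_reduce
      rw [if_neg (by simp : ¬Odd (2 * s)), Nat.mul_div_cancel_left s two_pos,
        Nat.mul_div_mul_left m s two_pos]
      by_cases h : Odd s
      · rw [if_pos h, zero_pow (exponent_ne_zero m s hs),
          Nat.totient_two_mul_of_odd h, mul_zero, add_zero]
      · rw [if_neg h, Nat.totient_two_mul_of_even (Nat.not_odd_iff_even.mp h)]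
        push_cast
        ring
  · intro r hr h
    beta_reduce
    rw [if_pos h, zero_pow (exponent_ne_zero (2 * m) r hr), mul_zero]
end

section
/- For every prime p with p ≡ 3 (mod 4), C_u(p) = 2·C_sd(p) and C_sd(p) = C_t(p); that is, the number of undirected circulant graphs of order p equals twice the number of self-complementary directed circulant graphs of order p, which in turn equals the number of circulant tournaments of order p. -/
open Finset

/-- Number of self-complementary directed circulant graphs of odd prime order `p`:
`C_sd(p) = (1/(p-1))·∑_{r | p-1, r even} φ(r)·2^{(p-1)/r}`. -/
def Csd (p : ℕ) : ℚ :=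
  (1 / ((p : ℚ) - 1)) *
    ∑ r ∈ (p - 1).divisors.filter (fun r => Even r),
      (Nat.totient r : ℚ) * (2 : ℚ) ^ ((p - 1) / r)

/-- Number of circulant tournaments of odd prime order `p`:
`C_t(p) = (1/(p-1))·∑_{r | p-1, r odd} φ(r)·2^{(p-1)/(2r)}`. -/
def Ct (p : ℕ) : ℚ :=
  (1 / ((p : ℚ) - 1)) *
    ∑ r ∈ (p - 1).divisors.filter (fun r => Odd r),
      (Nat.totient r : ℚ) * (2 : ℚ) ^ ((p - 1) / (2 * r))

/-- Number of undirected circulant graphs of odd prime order `p`: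
`C_u(p) = (2/(p-1))·∑_{r | (p-1)/2} φ(r)·2^{(p-1)/(2r)}`. -/
def Cu (p : ℕ) : ℚ :=
  (2 / ((p : ℚ) - 1)) *
    ∑ r ∈ ((p - 1) / 2).divisors,
      (Nat.totient r : ℚ) * (2 : ℚ) ^ ((p - 1) / (2 * r))

/-- The odd divisors of twice an odd number `m` are the divisors of `m`. -/
theorem filter_odd_divisors_two_mul {m : ℕ} (hm : Odd m) :
    (2 * m).divisors.filter (fun r => Odd r) = m.divisors := by
  ext r
  simp only [mem_filter, Nat.mem_divisors]
  constructor
  · rintro ⟨⟨hr, h0⟩, hodd⟩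
    exact ⟨(Nat.coprime_two_right.mpr hodd).dvd_of_dvd_mul_left hr, by omega⟩
  · rintro ⟨hr, h0⟩
    exact ⟨⟨hr.mul_left 2, by omega⟩, hm.of_dvd_nat hr⟩

/-- The even divisors of `2 * m` are the doubles of the divisors of `m`. -/
theorem filter_even_divisors_two_mul (m : ℕ) :
    (2 * m).divisors.filter (fun r => Even r) = m.divisors.image (fun r => 2 * r) := by
  ext r
  simp only [mem_filter, mem_image, Nat.mem_divisors]
  constructor
  · rintro ⟨⟨hr, h0⟩, heven⟩
    obtain ⟨k, rfl⟩ := heven.two_dvd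
    exact ⟨k, ⟨Nat.dvd_of_mul_dvd_mul_left two_pos hr, by omega⟩, rfl⟩
  · rintro ⟨k, ⟨hk, h0⟩, rfl⟩
    exact ⟨⟨Nat.mul_dvd_mul_left 2 hk, by omega⟩, even_two_mul k⟩

/-- For odd `m`, summing over the even divisors of `2 * m` amounts to summing over the divisors
of `m`, since `φ (2 * r) = φ r` for odd `r`. -/
theorem sum_even_divisors_two_mul_totient {m : ℕ} (hm : Odd m) (f : ℕ → ℚ) :
    ∑ r ∈ (2 * m).divisors.filter (fun r => Even r), (Nat.totient r : ℚ) * f r =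
      ∑ r ∈ m.divisors, (Nat.totient r : ℚ) * f (2 * r) := by
  rw [filter_even_divisors_two_mul,
    sum_image fun a _ b _ h => Nat.eq_of_mul_eq_mul_left two_pos h]
  refine sum_congr rfl fun r hr => ?_
  rw [Nat.totient_two_mul_of_odd (hm.of_dvd_nat (Nat.dvd_of_mem_divisors hr))]

/-- For every prime `p ≡ 3 (mod 4)`, `C_u(p) = 2·C_sd(p)` and `C_sd(p) = C_t(p)`. -/
theorem Cu_eq_two_mul_Csd_and_Csd_eq_Ct (p : ℕ) (hp : p.Prime)
    (hmod : p % 4 = 3) :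
    Cu p = 2 * Csd p ∧ Csd p = Ct p := by
  obtain ⟨m, hm, hpm⟩ : ∃ m, Odd m ∧ p - 1 = 2 * m :=
    ⟨(p - 1) / 2, Nat.odd_iff.mpr (by omega), by omega⟩
  have hsd := sum_even_divisors_two_mul_totient hm fun r => (2 : ℚ) ^ ((2 * m) / r)
  have hhalf : 2 * m / 2 = m := by omega
  simp only [Cu, Csd, Ct, hpm, hhalf, hsd, filter_odd_divisors_two_mul hm, and_true]
  ring
end

section
/- Let p > 3 be a prime such that q = (p+1)/2 is also prime, and write p − 1 = 2^{k+1}·p̃ with p̃ odd (here k ≥ 1 since 4 divides p − 1). Then for every z ∈ ℚ, 2·(1+z)·c_d(p, z) = c_d(p+1, z) + (1+z)·c̄_u(2p̃+1, z^{2^k}). -/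
open Finset

/-- Generating function by valency for directed circulant graphs of odd prime
order `p`: `c_d(p,z) = (1/(p-1))·∑_{r | p-1} φ(r)·(1+z^r)^{(p-1)/r}`. -/
def cDPrime (p : ℕ) (z : ℚ) : ℚ :=
  (1 / ((p : ℚ) - 1)) *
    ∑ r ∈ (p - 1).divisors, (Nat.totient r : ℚ) * (1 + z ^ r) ^ ((p - 1) / r)

/-- Generating function by valency for directed circulant graphs of order `2q`,
`q` an odd prime:
`c_d(2q,z) = (1+z)·(1/(q-1))·∑_{r | q-1} φ(r)·(1+z^r)^{2(q-1)/r}`. -/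
def cDTwicePrime (q : ℕ) (z : ℚ) : ℚ :=
  (1 + z) * ((1 / ((q : ℚ) - 1)) *
    ∑ r ∈ (q - 1).divisors, (Nat.totient r : ℚ) * (1 + z ^ r) ^ (2 * (q - 1) / r))

/-- For odd `p̃`, `c̄_u(2p̃+1, w) = (1/p̃)·∑_{r | p̃} φ(r)·(1+w^{2r})^{p̃/r}`
(the formula counting undirected circulants of order `2p̃+1` when that is prime). -/
def cUBar (pt : ℕ) (w : ℚ) : ℚ :=
  (1 / (pt : ℚ)) *
    ∑ r ∈ pt.divisors, (Nat.totient r : ℚ) * (1 + w ^ (2 * r)) ^ (pt / r)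

/-- For odd `m`, the divisors of `2 ^ (k + 1) * m` are those of `2 ^ k * m` together with the
numbers `2 ^ (k + 1) * d` for `d ∣ m`. -/
theorem sum_divisors_two_pow_succ_mul {M : Type*} [AddCommMonoid M] {m : ℕ} (hm : Odd m) (k : ℕ)
    (f : ℕ → M) :
    ∑ r ∈ (2 ^ (k + 1) * m).divisors, f r =
      ∑ r ∈ (2 ^ k * m).divisors, f r + ∑ d ∈ m.divisors, f (2 ^ (k + 1) * d) := by
  have hm0 : m ≠ 0 := hm.pos.ne'
  have hpow : 2 ^ (k + 1) ≠ 0 := by positivity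
  have hinj : Function.Injective fun d => 2 ^ (k + 1) * d := mul_right_injective₀ hpow
  have hdisj : Disjoint (2 ^ k * m).divisors (m.divisors.image fun d => 2 ^ (k + 1) * d) := by
    rw [Finset.disjoint_left]
    intro r hr hr'
    obtain ⟨d, -, rfl⟩ := Finset.mem_image.mp hr'
    have h : 2 ^ k * (2 * d) ∣ 2 ^ k * m := by
      simpa only [pow_succ, mul_assoc] using Nat.dvd_of_mem_divisors hr
    have h2 : 2 ∣ m := (Dvd.intro d rfl).trans (Nat.dvd_of_mul_dvd_mul_left (by positivity) h)
    exact hm.not_two_dvd_nat h2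
  have hunion : (2 ^ (k + 1) * m).divisors =
      (2 ^ k * m).divisors ∪ m.divisors.image fun d => 2 ^ (k + 1) * d := by
    ext r
    simp only [Finset.mem_union, Finset.mem_image, Nat.mem_divisors]
    constructor
    · rintro ⟨hr, -⟩
      obtain ⟨a, b, ha, hb, rfl⟩ := exists_dvd_and_dvd_of_dvd_mul hr
      obtain ⟨i, hi, rfl⟩ := (Nat.dvd_prime_pow Nat.prime_two).mp ha
      rcases hi.lt_or_eq with hlt | rfl
      · exact Or.inl ⟨mul_dvd_mul (pow_dvd_pow 2 (Nat.lt_succ_iff.mp hlt)) hb, by positivity⟩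
      · exact Or.inr ⟨b, ⟨hb, hm0⟩, rfl⟩
    · rintro (⟨hr, -⟩ | ⟨d, ⟨hd, -⟩, rfl⟩)
      · exact ⟨hr.trans (mul_dvd_mul_right (pow_dvd_pow 2 k.le_succ) m), by positivity⟩
      · exact ⟨mul_dvd_mul_left _ hd, by positivity⟩
  rw [hunion, Finset.sum_union hdisj, Finset.sum_image hinj.injOn]

/-- If `p > 3` and `q = (p+1)/2` are both prime and `p - 1 = 2^{k+1}·p̃` with `p̃`
odd (`k ≥ 1`), then `2·(1+z)·c_d(p,z) = c_d(p+1,z) + (1+z)·c̄_u(2p̃+1, z^{2^k})`. -/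
theorem two_mul_cD (p q k pt : ℕ) (hp : p.Prime) (hp3 : 3 < p)
    (hq : q.Prime) (hpq : p + 1 = 2 * q) (hk : 1 ≤ k) (hpt : Odd pt)
    (hfac : p - 1 = 2 ^ (k + 1) * pt) (z : ℚ) :
    2 * (1 + z) * cDPrime p z = cDTwicePrime q z + (1 + z) * cUBar pt (z ^ 2 ^ k) := by
  have hq1 : q - 1 = 2 ^ k * pt := by rw [pow_succ] at hfac; lia
  have hpt0 : (pt : ℚ) ≠ 0 := mod_cast hpt.pos.ne'
  have hqQ : (q : ℚ) - 1 = 2 ^ k * pt := by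
    rw [← Nat.cast_pred hq.pos, hq1]; push_cast; rfl
  have hpQ : (p : ℚ) - 1 = 2 ^ (k + 1) * pt := by
    rw [← Nat.cast_pred hp.pos, hfac]; push_cast; rfl
  have hexp : 2 * (2 ^ k * pt) = 2 ^ (k + 1) * pt := by ring
  have hterm : ∀ d ∈ pt.divisors,
      (Nat.totient (2 ^ (k + 1) * d) : ℚ) *
          (1 + z ^ (2 ^ (k + 1) * d)) ^ (2 ^ (k + 1) * pt / (2 ^ (k + 1) * d)) =
        2 ^ k * ((Nat.totient d : ℚ) * (1 + (z ^ 2 ^ k) ^ (2 * d)) ^ (pt / d)) := by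
    intro d hd
    have hodd : Odd d := hpt.of_dvd_nat (Nat.dvd_of_mem_divisors hd)
    have hcop : (2 ^ (k + 1)).Coprime d := (Nat.coprime_two_left.mpr hodd).pow_left _
    rw [Nat.totient_mul hcop, Nat.totient_prime_pow_succ Nat.prime_two,
      Nat.mul_div_mul_left _ _ (by positivity), ← pow_mul, pow_succ, mul_assoc (2 ^ k) 2 d]
    push_cast
    ring
  unfold cDPrime cDTwicePrime cUBar
  rw [hpQ, hqQ, hfac, hq1, hexp, sum_divisors_two_pow_succ_mul hpt, Finset.sum_congr rfl hterm,
    ← Finset.mul_sum]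
  field_simp
  ring
end
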